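/- Let ℓ be a positive integer with ℓ ≤ 44 and let u be a product of ℓ distinct odd primes. Then there exists a coprime matching from D(u) to the set of integers {1, 2, ..., 2^ℓ}. -/

import Mathlib

/-!
Let `P` be the set of prime factors of `u`, and for `m ∈ [1, 2 ^ #P]` let `T(m)` be the set of those
dividing `m`. A divisor `d` of `u` is coprime to `m` exactly when its primes avoid `T(m)`, so Hall's
condition follows once `T(m)`, for uniform `m`, is stochastically dominated by a uniform random
subset of `P`.

Reveal the primes of `P` in increasing order. It is enough that each `p` divides `m` with
probability at most `1 / 2` given the whole `p`-smooth part `s` of `m`. Since `m / s` is any number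
up to `2 ^ #P / s` without prime factors below `p`, this amounts to the inequality
`#(roughUpTo p x) ≤ #(roughUpTo (p + 1) (p * x))`, which holds for every prime `p` and every `x`.
For `x < p ^ 2` only the element `p` of the left side is missing on the right, and Bertrand's
postulate replaces it. When `x` is at least the primorial of `p - 1`, both sides are compared by
periodicity. In between, Chebyshev's lower bound for the number of primes up to `p * x` suffices.
-/

/-- A coprime matching from a finite set `A` of positive integers to a finite set `B`
is a bijection `ψ : A → B` with `gcd(a, ψ(a)) = 1` for every `a ∈ A`. -/
def CoprimeMatching (A B : Finset ℕ) : Prop :=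
  ∃ ψ : ℕ → ℕ, Set.BijOn ψ ↑A ↑B ∧ ∀ a ∈ A, Nat.gcd a (ψ a) = 1

open Finset

/-! ### Counting rough numbers -/

/-- The `z`-rough numbers in `[1, y]`, that is, those with all prime factors at least `z`.
(Mathlib's `Nat.roughNumbersUpTo` only asks for some prime factor to be large.) -/
def roughUpTo (z y : ℕ) : Finset ℕ := {m ∈ Icc 1 y | ∀ q ∈ m.primeFactors, z ≤ q}

lemma mem_roughUpTo {z y m : ℕ} :
    m ∈ roughUpTo z y ↔ (1 ≤ m ∧ m ≤ y) ∧ ∀ q, q.Prime → q ∣ m → z ≤ q := by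
  rw [roughUpTo, mem_filter, mem_Icc]
  refine and_congr_right fun hm => forall_congr' fun q => ?_
  rw [Nat.mem_primeFactors_of_ne_zero (by omega), and_imp]

lemma roughUpTo_mono (z : ℕ) : Monotone (roughUpTo z) := fun _ _ h =>
  filter_subset_filter _ (Icc_subset_Icc_right h)

lemma roughUpTo_anti {w z : ℕ} (h : w ≤ z) (y : ℕ) : roughUpTo z y ⊆ roughUpTo w y :=
  monotone_filter_right _ fun _ _ hm q hq => h.trans (hm q hq)

lemma card_roughUpTo_le_self (z y : ℕ) : #(roughUpTo z y) ≤ y :=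
  (card_filter_le _ _).trans_eq (by simp)

lemma roughUpTo_succ (n y : ℕ) :
    roughUpTo (n + 1) y = {m ∈ Ico 1 (1 + y) | (primorial n).Coprime m} := by
  ext m
  rw [mem_roughUpTo, mem_filter, mem_Ico, Nat.lt_one_add_iff]
  refine and_congr_right fun _ => ⟨fun h => Nat.coprime_of_dvd fun q hq hqn hqm => ?_,
    fun h q hq hqm => ?_⟩
  · exact (h q hq hqm).not_gt (Nat.lt_succ_of_le (hq.dvd_primorial_iff.1 hqn))
  · by_contra! hqn
    exact hq.ne_one
      (Nat.eq_one_of_dvd_coprimes h (hq.dvd_primorial_iff.2 (Nat.le_of_lt_succ hqn)) hqm)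

lemma totient_mul_div_le_card_filter_coprime (a k n : ℕ) :
    a.totient * (n / a) ≤ #{m ∈ Ico k (k + n) | a.Coprime m} := by
  have periods (j : ℕ) : a.totient * j ≤ #{m ∈ Ico k (k + a * j) | a.Coprime m} := by
    induction j with
    | zero => simp
    | succ j ih =>
      rw [mul_add_one, mul_add_one, ← add_assoc,
        ← Ico_union_Ico_eq_Ico (k.le_add_right (a * j)) (Nat.le_add_right _ a), filter_union,
        card_union_of_disjoint (disjoint_filter_filter (Ico_disjoint_Ico_consecutive _ _ _)),
        Nat.filter_coprime_Ico_eq_totient]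
      exact Nat.add_le_add_right ih _
  refine (periods (n / a)).trans (card_le_card (filter_subset_filter _ ?_))
  exact Ico_subset_Ico_right (Nat.add_le_add_left (Nat.mul_div_le n a) k)

lemma totient_mul_div_le_card_roughUpTo (n y : ℕ) :
    (primorial n).totient * (y / primorial n) ≤ #(roughUpTo (n + 1) y) :=
  roughUpTo_succ n y ▸ totient_mul_div_le_card_filter_coprime _ 1 y

lemma card_roughUpTo_le_totient_mul (n y : ℕ) :
    #(roughUpTo (n + 1) y) ≤ (primorial n).totient * (y / primorial n + 1) :=
  roughUpTo_succ n y ▸ Nat.Ico_filter_coprime_le 1 y (primorial_ne_zero n)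

lemma primorial_succ_of_prime {n : ℕ} (hn : (n + 1).Prime) :
    primorial (n + 1) = (n + 1) * primorial n := by
  rw [primorial, range_add_one, filter_insert, if_pos hn, prod_insert (by simp), primorial]

lemma totient_primorial_succ_of_prime {n : ℕ} (hn : (n + 1).Prime) :
    (primorial (n + 1)).totient = n * (primorial n).totient := by
  have hcop : (n + 1).Coprime (primorial n) := by
    rw [hn.coprime_iff_not_dvd, hn.dvd_primorial_iff]
    exact n.lt_irrefl
  rw [primorial_succ_of_prime hn, Nat.totient_mul hcop, Nat.totient_prime hn, Nat.add_sub_cancel]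

/-- Chebyshev's argument: `2 ^ n ≤ (n + 1) * lcm(1, …, n)` and `lcm(1, …, n) ≤ n ^ π(n)`. -/
lemma le_mul_primeCounting_add_one {n e : ℕ} (hn : n < 2 ^ e) :
    n ≤ e * (n.primeCounting + 1) := by
  rcases Nat.eq_zero_or_pos n with rfl | hpos
  · simp
  have hlcm : Nat.lcmUpto n ≤ n ^ n.primeCounting := by
    rw [Nat.lcmUpto_eq_prod_pow_log, ← Nat.primesLE_card_eq_primeCounting]
    exact prod_le_pow_card _ _ _ fun p _ => Nat.pow_log_le_self p hpos.ne'
  have hpow : 2 ^ n ≤ 2 ^ (e * (n.primeCounting + 1)) := calc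
    2 ^ n ≤ (n + 1) * Nat.lcmUpto n := Chebyshev.two_pow_le_mul_lcmUpto n
    _ ≤ 2 ^ e * (2 ^ e) ^ n.primeCounting :=
      Nat.mul_le_mul hn (hlcm.trans (Nat.pow_le_pow_left hn.le _))
    _ = 2 ^ (e * (n.primeCounting + 1)) := by rw [← pow_mul, ← pow_add]; ring_nf
  exact (Nat.pow_le_pow_iff_right one_lt_two).1 hpow

lemma primeCounting_add_two_le_card_roughUpTo_add {n y : ℕ} (hn : 1 ≤ n) (hy : 1 ≤ y) :
    y.primeCounting + 2 ≤ #(roughUpTo (n + 1) y) + n := by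
  have hsub : insert 1 (Nat.primesLE y) ⊆ roughUpTo (n + 1) y ∪ Icc 2 n := by
    intro m hm
    rw [mem_union, mem_roughUpTo, mem_Icc]
    rcases mem_insert.1 hm with rfl | hm
    · exact .inl ⟨⟨le_rfl, hy⟩, fun q hq hq1 => absurd (Nat.dvd_one.1 hq1) hq.ne_one⟩
    · obtain ⟨hmy, hprime⟩ := Nat.mem_primesLE.1 hm
      rcases Nat.lt_or_ge n m with hnm | hmn
      · refine .inl ⟨⟨hprime.one_le, hmy⟩, fun q hq hqm => ?_⟩
        rwa [(Nat.prime_dvd_prime_iff_eq hq hprime).1 hqm]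
      · exact .inr ⟨hprime.two_le, hmn⟩
  have hcard := (card_le_card hsub).trans (card_union_le _ _)
  rw [card_insert_of_notMem (by simp [Nat.mem_primesLE, Nat.not_prime_one]),
    Nat.primesLE_card_eq_primeCounting, Nat.card_Icc] at hcard
  omega

/-! ### Rough numbers up to `x` and up to `p * x` -/

/-- A multiple of `p` below `p ^ 2` other than `p` has a prime factor below `p`. -/
lemma erase_roughUpTo_subset_of_lt_sq {p x : ℕ} (hx : x < p ^ 2) :
    (roughUpTo p x).erase p ⊆ roughUpTo (p + 1) x := by
  intro m hm
  obtain ⟨hmp, hm⟩ := mem_erase.1 hm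
  obtain ⟨⟨hm1, hmx⟩, hrough⟩ := mem_roughUpTo.1 hm
  refine mem_roughUpTo.2 ⟨⟨hm1, hmx⟩, fun q hq hqm => (hrough q hq hqm).lt_of_ne ?_⟩
  rintro rfl
  obtain ⟨k, rfl⟩ := hqm
  have hk1 : k ≠ 1 := by rintro rfl; exact hmp (mul_one p)
  have hkp : k < p := Nat.lt_of_mul_lt_mul_left (hmx.trans_lt (sq p ▸ hx))
  have hmin := hrough k.minFac (Nat.minFac_prime hk1) (k.minFac_dvd.mul_left p)
  exact (hmin.trans (Nat.minFac_le (Nat.pos_of_mul_pos_left hm1))).not_gt hkp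

lemma card_roughUpTo_le_of_lt_sq {p x : ℕ} (hp : p.Prime) (hx : x < p ^ 2) :
    #(roughUpTo p x) ≤ #(roughUpTo (p + 1) (p * x)) := by
  have herase := (erase_roughUpTo_subset_of_lt_sq hx).trans
    (roughUpTo_mono (p + 1) (Nat.le_mul_of_pos_left x hp.pos))
  by_cases hpx : p ∈ roughUpTo p x
  · have hple : p ≤ x := (mem_roughUpTo.1 hpx).1.2
    -- Bertrand's postulate provides a prime to replace `p`.
    obtain ⟨r, hr, hxr, hrx⟩ := Nat.exists_prime_lt_and_le_two_mul x (hp.pos.trans_le hple).ne'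
    have hr_notMem : r ∉ (roughUpTo p x).erase p := fun h =>
      (mem_roughUpTo.1 (mem_of_mem_erase h)).1.2.not_gt hxr
    have hr_mem : r ∈ roughUpTo (p + 1) (p * x) :=
      mem_roughUpTo.2 ⟨⟨hr.one_le, hrx.trans (Nat.mul_le_mul_right x hp.two_le)⟩,
        fun q hq hqr => (Nat.prime_dvd_prime_iff_eq hq hr).1 hqr ▸ hple.trans_lt hxr⟩
    rw [← card_erase_add_one hpx, ← card_insert_of_notMem hr_notMem]
    exact card_le_card (insert_subset hr_mem herase)
  · exact erase_eq_of_notMem hpx ▸ card_le_card herase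

/-- Both sides are compared with the number of full periods, `x / n# = (n + 1) * x / (n + 1)#`. -/
lemma card_roughUpTo_le_of_primorial_le {n x : ℕ} (hn : (n + 1).Prime) (hn2 : 2 ≤ n)
    (hx : primorial n ≤ x) :
    #(roughUpTo (n + 1) x) ≤ #(roughUpTo (n + 2) ((n + 1) * x)) := by
  have hperiods : 1 ≤ x / primorial n := Nat.div_pos hx (primorial_pos n)
  calc #(roughUpTo (n + 1) x)
    _ ≤ (primorial n).totient * (x / primorial n + 1) := card_roughUpTo_le_totient_mul n x
    _ ≤ (primorial n).totient * (n * (x / primorial n)) := by gcongr; nlinarith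
    _ = (primorial (n + 1)).totient * ((n + 1) * x / primorial (n + 1)) := by
      rw [totient_primorial_succ_of_prime hn, primorial_succ_of_prime hn,
        Nat.mul_div_mul_left _ _ n.succ_pos]
      ring
    _ ≤ #(roughUpTo (n + 2) ((n + 1) * x)) := totient_mul_div_le_card_roughUpTo (n + 1) _

/-- As `(p - 1)# ≤ p ^ 2` for `p < 7`, the hypotheses force `7 ≤ p`. Then there are at most
`x / 3 + 2` integers up to `x` prime to `6`, and at least `x / 2 - p + 1` primes in `(p, p * x]` by
Chebyshev's bound, because `p * x < p# < 2 ^ (2 * p)`. -/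
lemma card_roughUpTo_le_of_lt_primorial {n x : ℕ} (hn : (n + 1).Prime) (hsq : (n + 1) ^ 2 ≤ x)
    (hx : x < primorial n) :
    #(roughUpTo (n + 1) x) ≤ #(roughUpTo (n + 2) ((n + 1) * x)) := by
  have hn6 : 6 ≤ n := by
    by_contra! hlt
    have hle : primorial n ≤ (n + 1) ^ 2 := by interval_cases n <;> revert hn <;> decide
    omega
  have hupper : #(roughUpTo (n + 1) x) ≤ 2 * (x / 6 + 1) := calc
    #(roughUpTo (n + 1) x) ≤ #(roughUpTo (3 + 1) x) :=
      card_le_card (roughUpTo_anti (by omega) x)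
    _ ≤ (primorial 3).totient * (x / primorial 3 + 1) := card_roughUpTo_le_totient_mul 3 x
    _ = 2 * (x / 6 + 1) := by
      rw [show primorial 3 = 6 by decide, show Nat.totient 6 = 2 by decide]
  have hpow : (n + 1) * x < 2 ^ (2 * (n + 1)) := calc
    (n + 1) * x < (n + 1) * primorial n := Nat.mul_lt_mul_of_pos_left hx n.succ_pos
    _ = primorial (n + 1) := (primorial_succ_of_prime hn).symm
    _ ≤ 4 ^ (n + 1) := primorial_le_four_pow _
    _ = 2 ^ (2 * (n + 1)) := pow_mul 2 2 _ ▸ rfl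
  have hchebyshev : x ≤ 2 * (((n + 1) * x).primeCounting + 1) := by
    refine Nat.le_of_mul_le_mul_left ?_ n.succ_pos
    linarith [le_mul_primeCounting_add_one hpow]
  have hlower : ((n + 1) * x).primeCounting + 2 ≤
      #(roughUpTo (n + 2) ((n + 1) * x)) + (n + 1) :=
    primeCounting_add_two_le_card_roughUpTo_add n.succ_pos (Nat.mul_pos n.succ_pos (by nlinarith))
  have hquad : 6 * (n + 1) + 6 ≤ x := by nlinarith
  omega

lemma card_roughUpTo_le_card_roughUpTo_succ {p : ℕ} (hp : p.Prime) (x : ℕ) :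
    #(roughUpTo p x) ≤ #(roughUpTo (p + 1) (p * x)) := by
  rcases hp.eq_two_or_odd' with rfl | hodd
  · calc #(roughUpTo 2 x) ≤ x := card_roughUpTo_le_self 2 x
      _ = (primorial 2).totient * (2 * x / primorial 2) := by simp
      _ ≤ #(roughUpTo 3 (2 * x)) := totient_mul_div_le_card_roughUpTo 2 _
  obtain ⟨n, rfl⟩ : ∃ n, p = n + 1 := ⟨p - 1, (Nat.sub_add_cancel hp.one_le).symm⟩
  rcases Nat.lt_or_ge x ((n + 1) ^ 2) with hsq | hsq
  · exact card_roughUpTo_le_of_lt_sq hp hsq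
  rcases Nat.lt_or_ge x (primorial n) with hx | hx
  · exact card_roughUpTo_le_of_lt_primorial hp hsq hx
  · have hn2 : 2 ≤ n := by
      have := hp.two_le
      obtain ⟨k, hk⟩ := hodd
      omega
    exact card_roughUpTo_le_of_primorial_le hp hn2 hx

/-! ### Smooth parts -/

/-- The largest divisor of `m` whose prime factors are all less than `z` (and `1` for `m = 0`), used
to condition on the behaviour of `m` at the primes below `z`. -/
def smoothPart (z m : ℕ) : ℕ := (m.primeFactorsList.filter (· < z)).prod

lemma smoothPart_mem_smoothNumbers (z m : ℕ) : smoothPart z m ∈ z.smoothNumbers :=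
  Nat.prod_mem_smoothNumbers m z

lemma exists_roughUpTo_smoothPart_mul_eq {z N m : ℕ} (hm : m ∈ Icc 1 N) :
    ∃ o ∈ roughUpTo z (N / smoothPart z m), smoothPart z m * o = m := by
  obtain ⟨hm1, hmN⟩ := mem_Icc.1 hm
  set o := (m.primeFactorsList.filter (¬ · < z)).prod with ho
  have hmul : smoothPart z m * o = m := by
    simp only [smoothPart, ho, ← List.prod_append, decide_not]
    rw [(List.filter_append_perm _ _).prod_eq, Nat.prod_primeFactorsList (by omega)]
  have hpos : 0 < smoothPart z m * o := hm1.trans_eq hmul.symm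
  refine ⟨o, mem_roughUpTo.2 ⟨⟨Nat.pos_of_mul_pos_left hpos, ?_⟩, fun q hq hqo => ?_⟩, hmul⟩
  · rw [Nat.le_div_iff_mul_le (Nat.pos_of_mul_pos_right hpos), mul_comm, hmul]
    exact hmN
  · have hq_mem : q ∈ m.primeFactorsList.filter (¬ · < z) :=
      mem_list_primes_of_dvd_prod hq.prime
        (fun r hr => (Nat.prime_of_mem_primeFactorsList (List.mem_of_mem_filter hr)).prime) hqo
    simpa using List.of_mem_filter hq_mem

lemma coprime_of_mem_smoothNumbers_of_mem_roughUpTo {z y s o : ℕ} (hs : s ∈ z.smoothNumbers)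
    (ho : o ∈ roughUpTo z y) : s.Coprime o :=
  Nat.coprime_of_dvd fun q hq hqs hqo =>
    ((mem_roughUpTo.1 ho).2 q hq hqo).not_gt (Nat.mem_smoothNumbers'.1 hs q hq hqs)

lemma smoothPart_mul_of_mem_roughUpTo {z y s o : ℕ} (hs : s ∈ z.smoothNumbers)
    (ho : o ∈ roughUpTo z y) : smoothPart z (s * o) = s := by
  have hpos : 1 ≤ s * o :=
    Nat.mul_pos (Nat.pos_of_ne_zero (Nat.ne_zero_of_mem_smoothNumbers hs)) (mem_roughUpTo.1 ho).1.1
  obtain ⟨o', ho', hmul⟩ :=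
    exists_roughUpTo_smoothPart_mul_eq (z := z) (mem_Icc.2 ⟨hpos, le_rfl⟩)
  have hs' := smoothPart_mem_smoothNumbers z (s * o)
  refine Nat.dvd_antisymm ?_ ?_
  · exact (coprime_of_mem_smoothNumbers_of_mem_roughUpTo hs' ho).dvd_of_dvd_mul_right
      (Dvd.intro _ hmul)
  · exact (coprime_of_mem_smoothNumbers_of_mem_roughUpTo hs ho').dvd_of_dvd_mul_right
      ((Nat.dvd_mul_right s o).trans hmul.symm.dvd)

lemma dvd_smoothPart_iff {z q m : ℕ} (hq : q.Prime) (hqz : q < z) (hm : m ≠ 0) :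
    q ∣ smoothPart z m ↔ q ∣ m := by
  obtain ⟨o, ho, hmul⟩ := exists_roughUpTo_smoothPart_mul_eq (z := z)
    (mem_Icc.2 ⟨Nat.pos_of_ne_zero hm, le_rfl⟩)
  have hqo : ¬ q ∣ o := fun h => ((mem_roughUpTo.1 ho).2 q hq h).not_gt hqz
  conv_rhs => rw [← hmul, hq.dvd_mul, or_iff_left hqo]

lemma filter_smoothPart_eq {z s : ℕ} (hs : s ∈ z.smoothNumbers) (N : ℕ) :
    {m ∈ Icc 1 N | smoothPart z m = s} = (roughUpTo z (N / s)).image (s * ·) := by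
  have hs0 : 0 < s := Nat.pos_of_ne_zero (Nat.ne_zero_of_mem_smoothNumbers hs)
  ext m
  rw [mem_filter, mem_image]
  constructor
  · rintro ⟨hm, rfl⟩
    exact exists_roughUpTo_smoothPart_mul_eq hm
  · rintro ⟨o, ho, rfl⟩
    obtain ⟨ho1, hoN⟩ := (mem_roughUpTo.1 ho).1
    exact ⟨mem_Icc.2 ⟨Nat.mul_pos hs0 ho1, (Nat.mul_le_mul_left s hoN).trans (Nat.mul_div_le N s)⟩,
      smoothPart_mul_of_mem_roughUpTo hs ho⟩

lemma card_filter_dvd_roughUpTo_le {p : ℕ} (hp : p.Prime) (y : ℕ) :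
    #{o ∈ roughUpTo p y | p ∣ o} ≤ #{o ∈ roughUpTo p y | ¬ p ∣ o} := by
  have hdvd : {o ∈ roughUpTo p y | p ∣ o} ⊆ (roughUpTo p (y / p)).image (p * ·) := by
    intro o ho
    obtain ⟨ho, k, rfl⟩ := mem_filter.1 ho
    obtain ⟨⟨hk1, hky⟩, hrough⟩ := mem_roughUpTo.1 ho
    have hk : k ≤ y / p := (Nat.le_div_iff_mul_le hp.pos).2 (mul_comm p k ▸ hky)
    exact mem_image_of_mem _ (mem_roughUpTo.2 ⟨⟨Nat.pos_of_mul_pos_left hk1, hk⟩,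
      fun q hq hqk => hrough q hq (hqk.mul_left p)⟩)
  have hnot_dvd : roughUpTo (p + 1) (p * (y / p)) ⊆ {o ∈ roughUpTo p y | ¬ p ∣ o} := by
    intro o ho
    refine mem_filter.2 ⟨roughUpTo_anti p.le_succ y (roughUpTo_mono _ (Nat.mul_div_le y p) ho), ?_⟩
    exact fun hpo => ((mem_roughUpTo.1 ho).2 p hp hpo).not_gt p.lt_succ_self
  calc #{o ∈ roughUpTo p y | p ∣ o}
    _ ≤ #(roughUpTo p (y / p)) := (card_le_card hdvd).trans card_image_le
    _ ≤ #(roughUpTo (p + 1) (p * (y / p))) := card_roughUpTo_le_card_roughUpTo_succ hp _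
    _ ≤ #{o ∈ roughUpTo p y | ¬ p ∣ o} := card_le_card hnot_dvd

lemma card_filter_dvd_smoothPart_fiber_le {p s : ℕ} (hp : p.Prime) (hs : s ∈ p.smoothNumbers)
    (N : ℕ) :
    #{m ∈ {m ∈ Icc 1 N | smoothPart p m = s} | p ∣ m} ≤
      #{m ∈ {m ∈ Icc 1 N | smoothPart p m = s} | ¬ p ∣ m} := by
  have hinj : Function.Injective (s * ·) :=
    mul_right_injective₀ (Nat.ne_zero_of_mem_smoothNumbers hs)
  have hdvd (o : ℕ) : p ∣ s * o ↔ p ∣ o := (hp.smoothNumbers_coprime hs).dvd_mul_left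
  simp only [filter_smoothPart_eq hs, filter_image, card_image_of_injective _ hinj, hdvd]
  exact card_filter_dvd_roughUpTo_le hp _

/-! ### Stochastic domination -/

section Domination

variable {R : Type*} [AddCommMonoid R] [PartialOrder R] [IsOrderedAddMonoid R]

lemma add_nsmul_add_le_two_nsmul {a b : ℕ} {u v : R} (hab : a ≤ b) (huv : u ≤ v) :
    (a + b) • (u + v) ≤ 2 • (a • u + b • v) := by
  obtain ⟨c, rfl⟩ := Nat.exists_eq_add_of_le hab
  calc (a + (a + c)) • (u + v)
    _ = (2 * a) • u + (2 * a + c) • v + c • u := by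
      simp only [add_nsmul, nsmul_add, mul_nsmul', two_nsmul]
      abel
    _ ≤ (2 * a) • u + (2 * a + c) • v + c • v := by gcongr
    _ = 2 • (a • u + (a + c) • v) := by
      simp only [add_nsmul, nsmul_add, mul_nsmul', two_nsmul]
      abel

/-- Replacing the event `p ∣ m` by an independent fair coin does not increase the sum, since `p ∣ m`
has probability at most `1 / 2` given the `p`-smooth part of `m`. -/
lemma sum_add_insert_le_two_nsmul_sum {p : ℕ} {L : Finset ℕ} (hp : p.Prime)
    (hL : ∀ q ∈ L, q.Prime ∧ q < p) {f : Finset ℕ → R} (hf : Antitone f) (N : ℕ) :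
    ∑ m ∈ Icc 1 N, (f {q ∈ L | q ∣ m} + f (insert p {q ∈ L | q ∣ m})) ≤
      2 • ∑ m ∈ Icc 1 N, f {q ∈ insert p L | q ∣ m} := by
  have hmaps : ∀ m ∈ Icc 1 N, smoothPart p m ∈ (Icc 1 N).image (smoothPart p) := fun _ =>
    mem_image_of_mem _
  rw [← sum_fiberwise_of_maps_to hmaps, ← sum_fiberwise_of_maps_to hmaps, smul_sum]
  refine sum_le_sum fun s hs => ?_
  obtain ⟨m₀, -, rfl⟩ := mem_image.1 hs
  set s := smoothPart p m₀
  set M := {m ∈ Icc 1 N | smoothPart p m = s}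
  set Q := {q ∈ L | q ∣ s}
  have hM : ∀ m ∈ M, {q ∈ L | q ∣ m} = Q := by
    intro m hm
    obtain ⟨hmN, hms⟩ := mem_filter.1 hm
    have hm0 : m ≠ 0 := by rw [mem_Icc] at hmN; omega
    exact filter_congr fun q hq => hms ▸ (dvd_smoothPart_iff (hL q hq).1 (hL q hq).2 hm0).symm
  have hcoin : ∑ m ∈ M, (f {q ∈ L | q ∣ m} + f (insert p {q ∈ L | q ∣ m})) =
      #M • (f (insert p Q) + f Q) :=
    sum_eq_card_nsmul fun m hm => by rw [hM m hm, add_comm]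
  have hdvd : ∑ m ∈ M with p ∣ m, f {q ∈ insert p L | q ∣ m} = #{m ∈ M | p ∣ m} • f (insert p Q) :=
    sum_eq_card_nsmul fun m hm => by
      rw [filter_insert, if_pos (mem_filter.1 hm).2, hM m (mem_filter.1 hm).1]
  have hnot_dvd : ∑ m ∈ M with ¬ p ∣ m, f {q ∈ insert p L | q ∣ m} = #{m ∈ M | ¬ p ∣ m} • f Q :=
    sum_eq_card_nsmul fun m hm => by
      rw [filter_insert, if_neg (mem_filter.1 hm).2, hM m (mem_filter.1 hm).1]
  rw [hcoin, ← sum_filter_add_sum_filter_not M (p ∣ ·), hdvd, hnot_dvd,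
    ← card_filter_add_card_filter_not (s := M) (p ∣ ·)]
  exact add_nsmul_add_le_two_nsmul
    (card_filter_dvd_smoothPart_fiber_le hp (smoothPart_mem_smoothNumbers p m₀) N)
    (hf (subset_insert p Q))

/-- The random set of `q ∈ L` dividing a uniform `m ∈ [1, N]` is stochastically dominated by a
uniform random subset of `L`. -/
lemma nsmul_sum_powerset_le_two_pow_nsmul_sum {L : Finset ℕ} (hL : ∀ q ∈ L, q.Prime)
    {f : Finset ℕ → R} (hf : Antitone f) (N : ℕ) :
    N • ∑ S ∈ L.powerset, f S ≤ 2 ^ #L • ∑ m ∈ Icc 1 N, f {q ∈ L | q ∣ m} := by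
  induction L using Finset.induction_on_max generalizing f with
  | empty => simp
  | insert p L hmax ih =>
    have hpL : p ∉ L := fun h => (hmax p h).false
    have hL' : ∀ q ∈ L, q.Prime := fun q hq => hL q (mem_insert_of_mem hq)
    have hg : Antitone fun S => f S + f (insert p S) := fun S T h =>
      add_le_add (hf h) (hf (insert_subset_insert p h))
    rw [sum_powerset_insert hpL, ← sum_add_distrib, card_insert_of_notMem hpL, pow_succ, mul_nsmul']
    exact (ih hL' hg).trans (nsmul_le_nsmul_right (sum_add_insert_le_two_nsmul_sum
      (hL p (mem_insert_self p L)) (fun q hq => ⟨hL' q hq, hmax q hq⟩) hf N) _)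

end Domination

/-! ### Hall's condition -/

lemma coprimeMatching_of_hall {A B : Finset ℕ} (hcard : #A = #B)
    (hall : ∀ s ⊆ A, #s ≤ #{b ∈ B | ∃ a ∈ s, a.Coprime b}) : CoprimeMatching A B := by
  let partners (a : A) : Finset ℕ := {b ∈ B | a.1.Coprime b}
  have hall' (s : Finset A) : #s ≤ #(s.biUnion partners) := by
    have hunion : s.biUnion partners = {b ∈ B | ∃ a ∈ s.map (.subtype _), a.Coprime b} := by
      ext b
      simp [partners]
      tauto
    rw [hunion, ← card_map (.subtype _)]
    exact hall _ (map_subtype_subset s)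
  obtain ⟨g, hg_inj, hg⟩ := (all_card_le_biUnion_card_iff_exists_injective partners).1 hall'
  let ψ (a : ℕ) : ℕ := if ha : a ∈ A then g ⟨a, ha⟩ else 0
  have hψ {a : ℕ} (ha : a ∈ A) : ψ a = g ⟨a, ha⟩ := dif_pos ha
  have hmaps : Set.MapsTo ψ A B := fun a ha => hψ ha ▸ (mem_filter.1 (hg ⟨a, ha⟩)).1
  have hinj : Set.InjOn ψ A := fun a ha b hb hab =>
    congrArg Subtype.val (hg_inj ((hψ ha).symm.trans (hab.trans (hψ hb))))
  exact ⟨ψ, ⟨hmaps, hinj, surjOn_of_injOn_of_card_le ψ hmaps hinj hcard.ge⟩,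
    fun a ha => hψ ha ▸ (mem_filter.1 (hg ⟨a, ha⟩)).2⟩

lemma card_divisors_of_squarefree {u : ℕ} (hu : Squarefree u) :
    #u.divisors = 2 ^ #u.primeFactors := by
  rw [Nat.card_divisors hu.ne_zero]
  refine prod_eq_pow_card fun q hq => ?_
  rw [Nat.factorization_eq_one_of_squarefree hu (Nat.prime_of_mem_primeFactors hq)
    (Nat.dvd_of_mem_primeFactors hq)]

lemma injOn_primeFactors_divisors {u : ℕ} (hu : Squarefree u) :
    Set.InjOn Nat.primeFactors u.divisors := by
  intro d hd d' hd' h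
  rw [← Nat.prod_primeFactors_of_squarefree (hu.squarefree_of_dvd (Nat.dvd_of_mem_divisors hd)), h,
    Nat.prod_primeFactors_of_squarefree (hu.squarefree_of_dvd (Nat.dvd_of_mem_divisors hd'))]

lemma card_le_card_filter_disjoint_primeFactors {u : ℕ} (hu : Squarefree u) {s : Finset ℕ}
    (hs : s ⊆ u.divisors) :
    #s ≤ #{S ∈ u.primeFactors.powerset | ∃ d ∈ s, Disjoint d.primeFactors S} := by
  refine card_le_card_of_injOn (fun d => u.primeFactors \ d.primeFactors) (fun d hd => ?_) ?_
  · exact mem_filter.2 ⟨mem_powerset.2 sdiff_subset, d, hd, disjoint_sdiff⟩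
  · intro d hd d' hd' h
    have hsub {e : ℕ} (he : e ∈ s) : e.primeFactors ⊆ u.primeFactors :=
      Nat.primeFactors_mono (Nat.dvd_of_mem_divisors (hs he)) hu.ne_zero
    refine injOn_primeFactors_divisors hu (hs hd) (hs hd') ?_
    rw [← Finset.sdiff_sdiff_eq_self (hsub hd), ← Finset.sdiff_sdiff_eq_self (hsub hd')]
    exact congrArg (u.primeFactors \ ·) h

lemma disjoint_primeFactors_filter_dvd_iff {u d m : ℕ} (hd : d ∈ u.divisors) (hm : m ≠ 0) :
    Disjoint d.primeFactors {q ∈ u.primeFactors | q ∣ m} ↔ d.Coprime m := by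
  obtain ⟨hdu, hu⟩ := Nat.mem_divisors.1 hd
  rw [← Nat.disjoint_primeFactors (ne_zero_of_dvd_ne_zero hu hdu) hm, disjoint_left, disjoint_left]
  refine forall₂_congr fun q hq => not_congr ?_
  rw [mem_filter, Nat.mem_primeFactors_of_ne_zero hm,
    and_iff_right (Nat.primeFactors_mono hdu hu hq),
    and_iff_right (Nat.prime_of_mem_primeFactors hq)]

lemma card_le_card_filter_exists_coprime {u : ℕ} (hu : Squarefree u) {s : Finset ℕ}
    (hs : s ⊆ u.divisors) :
    #s ≤ #{m ∈ Icc 1 (2 ^ #u.primeFactors) | ∃ d ∈ s, d.Coprime m} := by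
  let avoids (S : Finset ℕ) : Prop := ∃ d ∈ s, Disjoint d.primeFactors S
  have hf : Antitone fun S => if avoids S then 1 else 0 := by
    intro S T hST
    have hmono : avoids T → avoids S := fun ⟨d, hd, hdT⟩ => ⟨d, hd, hdT.mono_right hST⟩
    dsimp only
    split_ifs <;> simp_all
  have hdom := nsmul_sum_powerset_le_two_pow_nsmul_sum
    (fun q (hq : q ∈ u.primeFactors) => Nat.prime_of_mem_primeFactors hq) hf (2 ^ #u.primeFactors)
  rw [← card_filter, ← card_filter] at hdom
  calc #s
    _ ≤ #{S ∈ u.primeFactors.powerset | avoids S} := card_le_card_filter_disjoint_primeFactors hu hs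
    _ ≤ #{m ∈ Icc 1 (2 ^ #u.primeFactors) | avoids {q ∈ u.primeFactors | q ∣ m}} :=
      Nat.le_of_mul_le_mul_left hdom (by positivity)
    _ = #{m ∈ Icc 1 (2 ^ #u.primeFactors) | ∃ d ∈ s, d.Coprime m} := by
      congr 1
      refine filter_congr fun m hm => exists_congr fun d => and_congr_right fun hd => ?_
      exact disjoint_primeFactors_filter_dvd_iff (hs hd) (Nat.one_le_iff_ne_zero.1 (mem_Icc.1 hm).1)

theorem stmt_10_general (u : ℕ) (hsf : Squarefree u) :
    CoprimeMatching u.divisors (Icc 1 (2 ^ #u.primeFactors)) :=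
  coprimeMatching_of_hall
    (by rw [card_divisors_of_squarefree hsf, Nat.card_Icc, Nat.add_sub_cancel])
    fun _ => card_le_card_filter_exists_coprime hsf

theorem stmt_10 (ℓ : ℕ) (hℓ : 0 < ℓ) (hℓ44 : ℓ ≤ 44) (u : ℕ)
    (hsf : Squarefree u) (hodd : Odd u) (hω : u.primeFactors.card = ℓ) :
    CoprimeMatching u.divisors (Finset.Icc 1 (2 ^ ℓ)) :=
  hω ▸ stmt_10_general u hsf
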